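/- arXiv:1805.06778 — 3 statements merged into one kernel-verified Lean document; each statement's English description precedes it below -/
import Mathlib

section
/- Let X be a real Banach space with a Schauder basis (e_n). Then the following are equivalent: (a) (e_n) is reverse partially greedy, i.e., there exists a constant C such that ‖x − G_m(x)‖ ≤ C·σ̃^R_m(x) for all x ∈ X, all m ∈ ℕ, and every greedy ordering for x; (b) (e_n) is quasi-greedy and reverse conservative. -/
open Filter Topology

/-- A Schauder basis of a real normed space `X`, given by basis vectors `e n` together with
biorthogonal (coordinate) functionals `f n`, such that every `x` is the limit of its
partial-sum expansion `∑_{n < N} f n x • e n`. -/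
structure SchauderBasisSys (X : Type*) [NormedAddCommGroup X] [NormedSpace ℝ X] where
  e : ℕ → X
  f : ℕ → X →L[ℝ] ℝ
  biorth : ∀ m n : ℕ, f m (e n) = if m = n then (1 : ℝ) else 0
  expansion : ∀ x : X,
    Filter.Tendsto (fun N : ℕ => ∑ n ∈ Finset.range N, f n x • e n) Filter.atTop (nhds x)

namespace SchauderBasisSys

variable {X : Type*} [NormedAddCommGroup X] [NormedSpace ℝ X]

/-- The coordinate projection onto a finite set `A` of indices: `P_A x = ∑_{i ∈ A} e_i^*(x) e_i`. -/
noncomputable def P (S : SchauderBasisSys X) (A : Finset ℕ) (x : X) : X :=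
  ∑ i ∈ A, S.f i x • S.e i

/-- The indicator vector `1_A = ∑_{i ∈ A} e_i`. -/
noncomputable def ind (S : SchauderBasisSys X) (A : Finset ℕ) : X :=
  ∑ i ∈ A, S.e i

/-- A greedy ordering for `x`: an injection `ρ : ℕ → ℕ` whose range contains the support of `x`
and which rearranges the coordinates of `x` in nonincreasing order of absolute value. -/
def IsGreedyOrdering (S : SchauderBasisSys X) (x : X) (ρ : ℕ → ℕ) : Prop :=
  Function.Injective ρ ∧ (∀ n : ℕ, S.f n x ≠ 0 → n ∈ Set.range ρ) ∧
    ∀ j k : ℕ, j ≤ k → |S.f (ρ k) x| ≤ |S.f (ρ j) x|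

/-- The greedy set `Λ_m(x) = {ρ(0), …, ρ(m-1)}` associated to a greedy ordering `ρ`. -/
def Lam (ρ : ℕ → ℕ) (m : ℕ) : Finset ℕ := (Finset.range m).image ρ

/-- The `m`-th greedy approximation `G_m(x) = ∑_{j < m} e_{ρ(j)}^*(x) e_{ρ(j)}`. -/
noncomputable def G (S : SchauderBasisSys X) (x : X) (ρ : ℕ → ℕ) (m : ℕ) : X :=
  ∑ j ∈ Finset.range m, S.f (ρ j) x • S.e (ρ j)

/-- Quasi-greedy: `‖G_m(x)‖ ≤ K ‖x‖` uniformly. -/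
def QuasiGreedy (S : SchauderBasisSys X) : Prop :=
  ∃ K : ℝ, ∀ (x : X) (ρ : ℕ → ℕ) (m : ℕ),
    S.IsGreedyOrdering x ρ → ‖S.G x ρ m‖ ≤ K * ‖x‖

/-- Conservative: `‖1_A‖ ≤ Γ ‖1_B‖` whenever `|A| ≤ |B|` and `max A < min B`. -/
def Conservative (S : SchauderBasisSys X) : Prop :=
  ∃ Γ : ℝ, ∀ A B : Finset ℕ, A.card ≤ B.card →
    (∀ i ∈ A, ∀ j ∈ B, i < j) → ‖S.ind A‖ ≤ Γ * ‖S.ind B‖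

/-- Reverse conservative: `‖1_A‖ ≤ Γ ‖1_B‖` whenever `|A| ≤ |B|` and `max B < min A`. -/
def ReverseConservative (S : SchauderBasisSys X) : Prop :=
  ∃ Γ : ℝ, ∀ A B : Finset ℕ, A.card ≤ B.card →
    (∀ i ∈ A, ∀ j ∈ B, j < i) → ‖S.ind A‖ ≤ Γ * ‖S.ind B‖

/-- Partially greedy: `‖x - G_m(x)‖ ≤ C ‖∑_{n ≥ m} e_n^*(x) e_n‖ = C ‖x - P_{[0,m)}(x)‖`. -/
def PartiallyGreedy (S : SchauderBasisSys X) : Prop :=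
  ∃ C : ℝ, ∀ (x : X) (ρ : ℕ → ℕ) (m : ℕ), S.IsGreedyOrdering x ρ →
    ‖x - S.G x ρ m‖ ≤ C * ‖x - S.P (Finset.range m) x‖

/-- Almost greedy: `‖x - G_m(x)‖ ≤ C inf{‖x - P_A(x)‖ : |A| ≤ m}`. -/
def AlmostGreedy (S : SchauderBasisSys X) : Prop :=
  ∃ C : ℝ, ∀ (x : X) (ρ : ℕ → ℕ) (m : ℕ) (A : Finset ℕ), S.IsGreedyOrdering x ρ →
    A.card ≤ m → ‖x - S.G x ρ m‖ ≤ C * ‖x - S.P A x‖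

end SchauderBasisSys

namespace SchauderBasisSys

/-- A finite set can be prepended to an injective sequence of indices that avoids it. -/
lemma exists_injective_prepend (B : Finset ℕ) (τ : ℕ → ℕ) (hτ : Function.Injective τ)
    (hB : ∀ k, τ k ∉ B) :
    ∃ ρ : ℕ → ℕ, Function.Injective ρ ∧ Lam ρ B.card = B ∧ ∀ k, ρ (B.card + k) = τ k := by
  induction B using Finset.induction_on with
  | empty => exact ⟨τ, hτ, by simp [Lam], by simp⟩
  | insert b B hb ih =>
    obtain ⟨ρ, hρ, hLam, htail⟩ := ih fun k hk => hB k (Finset.mem_insert_of_mem hk)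
    have hbρ : ∀ k, ρ k ≠ b := by
      intro k hk
      rcases lt_or_ge k B.card with h | h
      · apply hb
        rw [← hLam, ← hk]
        exact Finset.mem_image_of_mem _ (Finset.mem_range.2 h)
      · obtain ⟨l, rfl⟩ := Nat.exists_eq_add_of_le h
        rw [htail] at hk
        exact hB l (hk ▸ Finset.mem_insert_self b B)
    refine ⟨fun n => Nat.casesOn n b ρ, ?_, ?_, ?_⟩
    · rintro (_ | i) (_ | j) hij
      · rfl
      · exact absurd hij.symm (hbρ j)
      · exact absurd hij (hbρ i)
      · exact congrArg _ (hρ hij)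
    · rw [Finset.card_insert_of_notMem hb]
      conv_rhs => rw [← hLam]
      ext n
      simp only [Lam, Finset.mem_image, Finset.mem_range, Finset.mem_insert]
      constructor
      · rintro ⟨_ | j, hj, rfl⟩
        · exact Or.inl rfl
        · exact Or.inr ⟨j, by omega, rfl⟩
      · rintro (rfl | ⟨j, hj, rfl⟩)
        · exact ⟨0, by omega, rfl⟩
        · exact ⟨j + 1, by omega, rfl⟩
    · intro k
      rw [Finset.card_insert_of_notMem hb, Nat.add_right_comm]
      exact htail k

section NormedSpace

variable {X : Type*} [NormedAddCommGroup X] [NormedSpace ℝ X]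

/-- Abel summation bound for nonnegative nondecreasing weights. -/
lemma norm_sum_smul_le_of_monotone (v : ℕ → X) (c : ℕ → ℝ) (M : ℝ) (n : ℕ)
    (hv : ∀ k, ‖∑ j ∈ Finset.range k, v j‖ ≤ M) (hc₀ : 0 ≤ c 0)
    (hc : ∀ j, j < n → c j ≤ c (j + 1)) :
    ‖∑ j ∈ Finset.range (n + 1), c j • v j‖ ≤ 2 * c n * M := by
  have hM : 0 ≤ M := (norm_nonneg _).trans (hv 0)
  have key : ∀ k ≤ n, 0 ≤ c k ∧ ‖∑ j ∈ Finset.range (k + 1), c j • v j -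
      c k • ∑ j ∈ Finset.range (k + 1), v j‖ ≤ c k * M := by
    intro k hk
    induction k with
    | zero => simpa using ⟨hc₀, mul_nonneg hc₀ hM⟩
    | succ k ih =>
      obtain ⟨h0, h1⟩ := ih (by omega)
      have h2 := hc k (by omega)
      refine ⟨h0.trans h2, ?_⟩
      have e : ∑ j ∈ Finset.range (k + 1 + 1), c j • v j -
          c (k + 1) • ∑ j ∈ Finset.range (k + 1 + 1), v j =
          (∑ j ∈ Finset.range (k + 1), c j • v j - c k • ∑ j ∈ Finset.range (k + 1), v j) -
          (c (k + 1) - c k) • ∑ j ∈ Finset.range (k + 1), v j := by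
        rw [Finset.sum_range_succ _ (k + 1), Finset.sum_range_succ _ (k + 1)]
        module
      have h3 : ‖(c (k + 1) - c k) • ∑ j ∈ Finset.range (k + 1), v j‖ ≤
          (c (k + 1) - c k) * M := by
        rw [norm_smul, Real.norm_of_nonneg (sub_nonneg.2 h2)]
        exact mul_le_mul_of_nonneg_left (hv _) (sub_nonneg.2 h2)
      rw [e]
      exact (norm_sub_le _ _).trans (by linarith)
  obtain ⟨h0, h1⟩ := key n le_rfl
  have h2 : ‖c n • ∑ j ∈ Finset.range (n + 1), v j‖ ≤ c n * M := by
    rw [norm_smul, Real.norm_of_nonneg h0]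
    exact mul_le_mul_of_nonneg_left (hv _) h0
  have h3 := norm_add_le (∑ j ∈ Finset.range (n + 1), c j • v j -
      c n • ∑ j ∈ Finset.range (n + 1), v j) (c n • ∑ j ∈ Finset.range (n + 1), v j)
  rw [sub_add_cancel] at h3
  linarith

/-- Coefficients in `[0, t]` give a vector dominated by `t` times the largest subsum. -/
lemma norm_sum_smul_le_of_nonneg {ι : Type*} (v : ι → X) (M : ℝ) (A : Finset ι)
    (hM : ∀ B ⊆ A, ‖∑ i ∈ B, v i‖ ≤ M) (a : ι → ℝ) (t : ℝ) (ht : 0 ≤ t)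
    (ha₀ : ∀ i ∈ A, 0 ≤ a i) (ha : ∀ i ∈ A, a i ≤ t) :
    ‖∑ i ∈ A, a i • v i‖ ≤ t * M := by
  classical
  induction A using Finset.strongInduction generalizing a t with
  | H A ih =>
    have hM0 : 0 ≤ M := (norm_nonneg _).trans (hM A subset_rfl)
    rcases A.eq_empty_or_nonempty with rfl | hA
    · simpa using mul_nonneg ht hM0
    obtain ⟨i₀, hi₀, hmin⟩ := A.exists_min_image a hA
    have h := ih (A.erase i₀) (Finset.erase_ssubset hi₀)
      (fun B hB => hM B (hB.trans (Finset.erase_subset _ _)))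
      (fun i => a i - a i₀) (t - a i₀) (sub_nonneg.2 (ha _ hi₀))
      (fun i hi => sub_nonneg.2 (hmin i (Finset.mem_of_mem_erase hi)))
      (fun i hi => sub_le_sub_right (ha i (Finset.mem_of_mem_erase hi)) _)
    have e : ∑ i ∈ A, a i • v i =
        a i₀ • ∑ i ∈ A, v i + ∑ i ∈ A.erase i₀, (a i - a i₀) • v i := by
      rw [Finset.sum_erase A (by simp), Finset.smul_sum, ← Finset.sum_add_distrib]
      exact Finset.sum_congr rfl fun i _ => by module
    have h' : ‖a i₀ • ∑ i ∈ A, v i‖ ≤ a i₀ * M := by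
      rw [norm_smul, Real.norm_of_nonneg (ha₀ _ hi₀)]
      exact mul_le_mul_of_nonneg_left (hM A subset_rfl) (ha₀ _ hi₀)
    rw [e]
    exact (norm_add_le _ _).trans (by linarith)

/-- Coefficients in `[-t, t]` give a vector dominated by `2 * t` times the largest subsum. -/
lemma norm_sum_smul_le_of_abs_le {ι : Type*} (v : ι → X) (M : ℝ) (A : Finset ι)
    (hM : ∀ B ⊆ A, ‖∑ i ∈ B, v i‖ ≤ M) (a : ι → ℝ) (t : ℝ) (ht : 0 ≤ t)
    (ha : ∀ i ∈ A, |a i| ≤ t) :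
    ‖∑ i ∈ A, a i • v i‖ ≤ 2 * t * M := by
  have h₁ := norm_sum_smul_le_of_nonneg v M A hM (fun i => max (a i) 0) t ht
    (fun i _ => le_max_right _ _) (fun i hi => max_le ((le_abs_self _).trans (ha i hi)) ht)
  have h₂ := norm_sum_smul_le_of_nonneg v M A hM (fun i => max (-a i) 0) t ht
    (fun i _ => le_max_right _ _) (fun i hi => max_le ((neg_le_abs _).trans (ha i hi)) ht)
  have e : ∑ i ∈ A, a i • v i =
      ∑ i ∈ A, max (a i) 0 • v i - ∑ i ∈ A, max (-a i) 0 • v i := by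
    rw [← Finset.sum_sub_distrib]
    refine Finset.sum_congr rfl fun i _ => ?_
    rw [← sub_smul]
    congr 1
    rcases le_total (a i) 0 with h | h
    · rw [max_eq_right h, max_eq_left (by linarith)]; ring
    · rw [max_eq_left h, max_eq_right (by linarith)]; ring
  rw [e]
  exact (norm_sub_le _ _).trans (by linarith)

end NormedSpace

variable {X : Type*} [NormedAddCommGroup X] [NormedSpace ℝ X] (S : SchauderBasisSys X)

lemma f_sum_smul (A : Finset ℕ) (a : ℕ → ℝ) (n : ℕ) :
    S.f n (∑ i ∈ A, a i • S.e i) = if n ∈ A then a n else 0 := by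
  simp [map_sum, S.biorth]

lemma f_ind (A : Finset ℕ) (n : ℕ) : S.f n (S.ind A) = if n ∈ A then 1 else 0 := by
  simpa [ind] using S.f_sum_smul A (fun _ => 1) n

lemma G_eq_P {ρ : ℕ → ℕ} (hρ : Function.Injective ρ) (x : X) (m : ℕ) :
    S.G x ρ m = S.P (Lam ρ m) x := by
  rw [P, Lam, Finset.sum_image hρ.injOn, G]

/-- If the coordinates of `z` have modulus one on `B ∪ D` and vanish elsewhere, then `B` is a
greedy set for `z`. -/
lemma exists_greedyOrdering_of_abs_eq_one (z : X) (B D : Finset ℕ) (hBD : Disjoint B D)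
    (hone : ∀ n ∈ B ∪ D, |S.f n z| = 1) (hzero : ∀ n ∉ B ∪ D, S.f n z = 0) :
    ∃ ρ, S.IsGreedyOrdering z ρ ∧ Lam ρ B.card = B := by
  have hlt : ∀ n ∈ B ∪ D, n < (B ∪ D).sup id + 1 := fun n hn =>
    Nat.lt_succ_of_le (Finset.le_sup (f := id) hn)
  obtain ⟨τ, hτ, hτD, hτtail⟩ := exists_injective_prepend D (fun k => (B ∪ D).sup id + 1 + k)
    (add_right_injective _)
    (fun k hk => absurd (hlt _ (Finset.mem_union_right _ hk)) (by omega))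
  have hτB : ∀ k, τ k ∉ B := by
    intro k hk
    rcases lt_or_ge k D.card with h | h
    · refine Finset.disjoint_left.1 hBD hk ?_
      rw [← hτD]
      exact Finset.mem_image_of_mem _ (Finset.mem_range.2 h)
    · obtain ⟨l, rfl⟩ := Nat.exists_eq_add_of_le h
      rw [hτtail] at hk
      exact absurd (hlt _ (Finset.mem_union_left _ hk)) (by omega)
  obtain ⟨ρ, hρ, hρB, hρtail⟩ := exists_injective_prepend B τ hτ hτB
  have hmemB : ∀ n, n ∈ B ↔ ∃ j, j < B.card ∧ ρ j = n := by
    intro n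
    conv_lhs => rw [← hρB]
    simp [Lam]
  have hmemD : ∀ n, n ∈ D ↔ ∃ j, j < D.card ∧ τ j = n := by
    intro n
    conv_lhs => rw [← hτD]
    simp [Lam]
  have hhead : ∀ j, j < B.card + D.card → ρ j ∈ B ∪ D := by
    intro j hj
    rcases lt_or_ge j B.card with h | h
    · exact Finset.mem_union_left _ ((hmemB _).2 ⟨j, h, rfl⟩)
    · obtain ⟨l, rfl⟩ := Nat.exists_eq_add_of_le h
      exact Finset.mem_union_right _ ((hmemD _).2 ⟨l, by omega, (hρtail l).symm⟩)
  have htail : ∀ j, B.card + D.card ≤ j → ρ j ∉ B ∪ D := by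
    intro j hj hmem
    obtain ⟨l, rfl⟩ := Nat.exists_eq_add_of_le hj
    rw [add_assoc, hρtail, hτtail] at hmem
    exact absurd (hlt _ hmem) (by omega)
  refine ⟨ρ, ⟨hρ, fun n hn => ?_, fun j k hjk => ?_⟩, hρB⟩
  · have hmem : n ∈ B ∪ D := by
      by_contra h
      exact hn (hzero n h)
    rcases Finset.mem_union.1 hmem with h | h
    · obtain ⟨j, -, rfl⟩ := (hmemB n).1 h
      exact ⟨j, rfl⟩
    · obtain ⟨j, -, rfl⟩ := (hmemD n).1 h
      exact ⟨B.card + j, hρtail j⟩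
  · rcases lt_or_ge k (B.card + D.card) with h | h
    · rw [hone _ (hhead k h), hone _ (hhead j (by omega))]
    · rw [hzero _ (htail k h), abs_zero]
      exact abs_nonneg _

/-- Removing from `x` the coordinates in a finite set `A` keeps the initial greedy sets that do
not meet `A`. -/
lemma IsGreedyOrdering.exists_sub_P {S : SchauderBasisSys X} {x : X} {ρ : ℕ → ℕ}
    (hρ : S.IsGreedyOrdering x ρ) (A : Finset ℕ) (m : ℕ) (hA : ∀ j < m, ρ j ∉ A) :
    ∃ ρ', S.IsGreedyOrdering (x - S.P A x) ρ' ∧ ∀ j < m, ρ' j = ρ j := by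
  classical
  have hf : ∀ n, S.f n (x - S.P A x) = if n ∈ A then 0 else S.f n x := by
    intro n
    rw [map_sub, P, S.f_sum_smul A (fun i => S.f i x)]
    split_ifs <;> simp
  have hinf : {k | ρ k ∉ A}.Infinite := by
    have : (ρ ⁻¹' (A : Set ℕ)).Finite := A.finite_toSet.preimage hρ.1.injOn
    exact this.infinite_compl
  have hnot : ∀ k, ρ (Nat.nth (fun k => ρ k ∉ A) k) ∉ A := fun k => Nat.nth_mem_of_infinite hinf k
  refine ⟨fun k => ρ (Nat.nth (fun k => ρ k ∉ A) k),
    ⟨hρ.1.comp (Nat.nth_injective hinf), fun n hn => ?_, fun j k hjk => ?_⟩, fun j hj => ?_⟩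
  · rw [hf] at hn
    have hnA : n ∉ A := fun h => hn (if_pos h)
    rw [if_neg hnA] at hn
    obtain ⟨k, rfl⟩ := hρ.2.1 n hn
    exact ⟨Nat.count (fun k => ρ k ∉ A) k, congrArg ρ (Nat.nth_count hnA)⟩
  · rw [hf, hf, if_neg (hnot j), if_neg (hnot k)]
    exact hρ.2.2 _ _ ((Nat.nth_monotone hinf) hjk)
  · have hcount : Nat.count (fun k => ρ k ∉ A) j = j :=
      Nat.count_iff_forall.2 fun {i} hi => hA i (hi.trans hj)
    have h := Nat.nth_count (p := fun k => ρ k ∉ A) (hA j hj)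
    rw [hcount] at h
    exact congrArg ρ h

/-- A quasi-greedy basis satisfies a lower estimate by the indicator of a greedy set. -/
lemma norm_ind_Lam_le {K : ℝ} (hK₀ : 0 ≤ K)
    (hK : ∀ (x : X) (ρ : ℕ → ℕ) (m : ℕ), S.IsGreedyOrdering x ρ → ‖S.G x ρ m‖ ≤ K * ‖x‖)
    {y : X} {ρ : ℕ → ℕ} (hρ : S.IsGreedyOrdering y ρ) (n : ℕ) :
    |S.f (ρ n) y| * ‖S.ind (Lam ρ (n + 1))‖ ≤ 4 * K ^ 2 * ‖y‖ := by
  set t := |S.f (ρ n) y| with ht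
  rcases (abs_nonneg (S.f (ρ n) y)).eq_or_lt' with h0 | hpos
  · rw [ht, h0, zero_mul]; positivity
  have hposj : ∀ j ≤ n, 0 < |S.f (ρ j) y| := fun j hj => hpos.trans_le (hρ.2.2 _ _ hj)
  set ε : ℕ → ℝ := fun i => |S.f i y|⁻¹ * S.f i y
  set z : X := ∑ i ∈ Lam ρ (n + 1), ε i • S.e i with hz
  have hLam : ∀ i, i ∈ Lam ρ (n + 1) → 0 < |S.f i y| := by
    intro i hi
    obtain ⟨j, hj, rfl⟩ := Finset.mem_image.1 hi
    exact hposj j (Nat.lt_succ_iff.1 (Finset.mem_range.1 hj))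
  have hzK : t * ‖z‖ ≤ 2 * K * ‖y‖ := by
    have h := norm_sum_smul_le_of_monotone (fun j => S.f (ρ j) y • S.e (ρ j))
      (fun j => |S.f (ρ j) y|⁻¹) (K * ‖y‖) n (fun k => hK y ρ k hρ)
      (inv_nonneg.2 (abs_nonneg _))
      (fun j hj => inv_anti₀ (hposj (j + 1) hj) (hρ.2.2 _ _ (Nat.le_succ j)))
    have e : z = ∑ j ∈ Finset.range (n + 1), |S.f (ρ j) y|⁻¹ • S.f (ρ j) y • S.e (ρ j) := by
      rw [hz, Lam, Finset.sum_image hρ.1.injOn]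
      exact Finset.sum_congr rfl fun j _ => mul_smul _ _ _
    rw [e]
    calc _ ≤ t * (2 * t⁻¹ * (K * ‖y‖)) := mul_le_mul_of_nonneg_left h hpos.le
      _ = (t * t⁻¹) * (2 * K * ‖y‖) := by ring
      _ = 2 * K * ‖y‖ := by rw [mul_inv_cancel₀ hpos.ne', one_mul]
  have hfz : ∀ i, S.f i z = if i ∈ Lam ρ (n + 1) then ε i else 0 := S.f_sum_smul _ _
  have hsub : ∀ B ⊆ Lam ρ (n + 1), ‖S.P B z‖ ≤ K * ‖z‖ := by
    intro B hB
    have hu : B ∪ (Lam ρ (n + 1) \ B) = Lam ρ (n + 1) := Finset.union_sdiff_of_subset hB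
    obtain ⟨π, hπ, hπB⟩ := S.exists_greedyOrdering_of_abs_eq_one z B (Lam ρ (n + 1) \ B)
      Finset.disjoint_sdiff
      (fun i hi => by
        rw [hu] at hi
        rw [hfz, if_pos hi, abs_mul, abs_inv, abs_abs, inv_mul_cancel₀ (hLam i hi).ne'])
      (fun i hi => by
        rw [hu] at hi
        rw [hfz, if_neg hi])
    have h := hK z π B.card hπ
    rwa [S.G_eq_P hπ.1, hπB] at h
  have hind : ‖S.ind (Lam ρ (n + 1))‖ ≤ 2 * (K * ‖z‖) := by
    have e : S.ind (Lam ρ (n + 1)) =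
        S.P ((Lam ρ (n + 1)).filter fun i => 0 < S.f i y) z -
        S.P ((Lam ρ (n + 1)).filter fun i => ¬ 0 < S.f i y) z := by
      rw [ind, P, P, ← Finset.sum_filter_add_sum_filter_not _ (fun i => 0 < S.f i y),
        sub_eq_add_neg, ← Finset.sum_neg_distrib]
      congr 1
      · refine Finset.sum_congr rfl fun i hi => ?_
        obtain ⟨hi, hs⟩ := Finset.mem_filter.1 hi
        have hε : ε i = 1 := by
          simp only [ε]
          rw [abs_of_pos hs, inv_mul_cancel₀ hs.ne']
        rw [hfz, if_pos hi, hε, one_smul]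
      · refine Finset.sum_congr rfl fun i hi => ?_
        obtain ⟨hi, hs⟩ := Finset.mem_filter.1 hi
        have hs' : S.f i y < 0 := lt_of_le_of_ne (not_lt.1 hs) (abs_pos.1 (hLam i hi))
        have hε : ε i = -1 := by
          simp only [ε]
          rw [abs_of_neg hs', inv_neg, neg_mul, inv_mul_cancel₀ hs'.ne]
        rw [hfz, if_pos hi, hε, neg_one_smul, neg_neg]
    rw [e]
    have h₁ := hsub _ (Finset.filter_subset (fun i => 0 < S.f i y) _)
    have h₂ := hsub _ (Finset.filter_subset (fun i => ¬ 0 < S.f i y) _)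
    exact (norm_sub_le _ _).trans (by linarith)
  calc t * ‖S.ind (Lam ρ (n + 1))‖ ≤ t * (2 * (K * ‖z‖)) :=
        mul_le_mul_of_nonneg_left hind hpos.le
    _ = 2 * K * (t * ‖z‖) := by ring
    _ ≤ 2 * K * (2 * K * ‖y‖) := mul_le_mul_of_nonneg_left hzK (by positivity)
    _ = 4 * K ^ 2 * ‖y‖ := by ring

end SchauderBasisSys

open SchauderBasisSys

/-- A Schauder basis of a real Banach space is reverse partially greedy
(i.e. there is `C` with `‖x - G_m(x)‖ ≤ C σ̃^R_m(x)`, the infimum over finite `A` with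
`|A| ≤ m` and `min A > β_m(x) = max Λ_m(x)` of `‖x - P_A(x)‖`) if and only if it is
quasi-greedy and reverse conservative. -/
theorem stmt_1 {X : Type*} [NormedAddCommGroup X] [NormedSpace ℝ X] [CompleteSpace X]
    (S : SchauderBasisSys X) :
    (∃ C : ℝ, ∀ (x : X) (ρ : ℕ → ℕ) (m : ℕ) (A : Finset ℕ),
        S.IsGreedyOrdering x ρ → A.card ≤ m →
        (∀ i ∈ A, ∀ j ∈ Lam ρ m, j < i) →
        ‖x - S.G x ρ m‖ ≤ C * ‖x - S.P A x‖) ↔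
      S.QuasiGreedy ∧ S.ReverseConservative := by
  constructor
  · rintro ⟨C, hC⟩
    refine ⟨⟨1 + C, fun x ρ m hρ => ?_⟩, ⟨C, fun A B hcard hlt => ?_⟩⟩
    · have h := hC x ρ m ∅ hρ (by simp) (by simp)
      rw [P, Finset.sum_empty, sub_zero] at h
      have h' := norm_sub_le x (x - S.G x ρ m)
      rw [sub_sub_cancel] at h'
      linarith
    · have hdisj : Disjoint B A :=
        Finset.disjoint_left.2 fun i hB hA => lt_irrefl i (hlt i hA i hB)
      have hf : ∀ n, S.f n (S.ind B + S.ind A) = if n ∈ B ∪ A then 1 else 0 := by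
        intro n
        rw [ind, ind, ← Finset.sum_union hdisj]
        exact S.f_ind _ n
      have hP : ∀ D ⊆ B ∪ A, S.P D (S.ind B + S.ind A) = S.ind D := by
        intro D hD
        exact Finset.sum_congr rfl fun i hi => by rw [hf, if_pos (hD hi), one_smul]
      obtain ⟨ρ, hρ, hLam⟩ := S.exists_greedyOrdering_of_abs_eq_one (S.ind B + S.ind A) B A hdisj
        (fun n hn => by rw [hf, if_pos hn, abs_one]) (fun n hn => by rw [hf, if_neg hn])
      have h := hC _ ρ B.card A hρ hcard (by rwa [hLam])
      rwa [S.G_eq_P hρ.1, hLam, hP B Finset.subset_union_left, hP A Finset.subset_union_right,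
        add_sub_cancel_left, add_sub_cancel_right] at h
  · rintro ⟨⟨K', hK'⟩, ⟨Γ', hΓ'⟩⟩
    obtain ⟨K, hK₀, hK⟩ : ∃ K : ℝ, 0 ≤ K ∧ ∀ (x : X) (ρ : ℕ → ℕ) (m : ℕ),
        S.IsGreedyOrdering x ρ → ‖S.G x ρ m‖ ≤ K * ‖x‖ :=
      ⟨|K'|, abs_nonneg _, fun x ρ m h => (hK' x ρ m h).trans
        (mul_le_mul_of_nonneg_right (le_abs_self _) (norm_nonneg _))⟩
    obtain ⟨Γ, hΓ₀, hΓ⟩ : ∃ Γ : ℝ, 0 ≤ Γ ∧ ∀ A B : Finset ℕ, A.card ≤ B.card →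
        (∀ i ∈ A, ∀ j ∈ B, j < i) → ‖S.ind A‖ ≤ Γ * ‖S.ind B‖ :=
      ⟨|Γ'|, abs_nonneg _, fun A B h h' => (hΓ' A B h h').trans
        (mul_le_mul_of_nonneg_right (le_abs_self _) (norm_nonneg _))⟩
    refine ⟨1 + K + 8 * Γ * K ^ 2, fun x ρ m A hρ hcard hlt => ?_⟩
    have hρA : ∀ j < m, ρ j ∉ A := fun j hj h => lt_irrefl _
      (hlt _ h _ (Finset.mem_image_of_mem ρ (Finset.mem_range.2 hj)))
    obtain ⟨ρ', hρ', heq⟩ := hρ.exists_sub_P A m hρA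
    have hLam : Lam ρ' m = Lam ρ m :=
      Finset.image_congr fun j hj => heq j (Finset.mem_range.1 hj)
    have hfρ : ∀ j < m, S.f (ρ j) (x - S.P A x) = S.f (ρ j) x := by
      intro j hj
      rw [map_sub, P, S.f_sum_smul A (fun i => S.f i x), if_neg (hρA j hj), sub_zero]
    have hG : S.G (x - S.P A x) ρ' m = S.G x ρ m :=
      Finset.sum_congr rfl fun j hj => by
        rw [heq j (Finset.mem_range.1 hj), hfρ j (Finset.mem_range.1 hj)]
    have hPA : ‖S.P A x‖ ≤ 8 * Γ * K ^ 2 * ‖x - S.P A x‖ := by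
      rcases m with _ | n
      · rw [Finset.card_eq_zero.1 (Nat.le_zero.1 hcard), P, Finset.sum_empty, norm_zero]
        positivity
      have hind := S.norm_ind_Lam_le hK₀ hK hρ' n
      rw [hLam, heq n n.lt_succ_self, hfρ n n.lt_succ_self] at hind
      have hcardLam : (Lam ρ (n + 1)).card = n + 1 := by
        rw [Lam, Finset.card_image_of_injective _ hρ.1, Finset.card_range]
      have hcoef : ∀ i ∈ A, |S.f i x| ≤ |S.f (ρ n) x| := by
        intro i hi
        by_cases h0 : S.f i x = 0
        · rw [h0, abs_zero]
          exact abs_nonneg _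
        obtain ⟨k, rfl⟩ := hρ.2.1 i h0
        exact hρ.2.2 _ _ (by_contra fun h => hρA k (by omega) hi)
      have h := norm_sum_smul_le_of_abs_le S.e (Γ * ‖S.ind (Lam ρ (n + 1))‖) A
        (fun B hB => hΓ B _ ((Finset.card_le_card hB).trans (hcard.trans hcardLam.ge))
          fun i hi => hlt i (hB hi))
        (fun i => S.f i x) _ (abs_nonneg _) hcoef
      calc ‖S.P A x‖ ≤ 2 * |S.f (ρ n) x| * (Γ * ‖S.ind (Lam ρ (n + 1))‖) := h
        _ = 2 * Γ * (|S.f (ρ n) x| * ‖S.ind (Lam ρ (n + 1))‖) := by ring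
        _ ≤ 2 * Γ * (4 * K ^ 2 * ‖x - S.P A x‖) :=
          mul_le_mul_of_nonneg_left hind (by positivity)
        _ = 8 * Γ * K ^ 2 * ‖x - S.P A x‖ := by ring
    have hGm := hK _ ρ' m hρ'
    rw [hG] at hGm
    calc ‖x - S.G x ρ m‖ = ‖(x - S.P A x) - S.G x ρ m + S.P A x‖ := by congr 1; abel
      _ ≤ ‖x - S.P A x‖ + ‖S.G x ρ m‖ + ‖S.P A x‖ :=
        (norm_add_le _ _).trans (add_le_add_left (norm_sub_le _ _) _)
      _ ≤ (1 + K + 8 * Γ * K ^ 2) * ‖x - S.P A x‖ := by linarith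
end

section
/- For n ≥ 1 let F_n = {A ⊂ ℕ finite : |A| ≤ n! and n! ≤ min A} and F = ⋃_{n≥1} F_n, and on c00 define the norm ‖x‖ = sup{Σ_{i∈A}|x_i| : A ∈ F}. Let ‖·‖* denote the induced dual norm on finitely supported functionals, i.e., for scalars (a_i), ‖Σ_i a_i e_i^*‖* = sup{Σ_i a_i x_i : x ∈ c00, ‖x‖ ≤ 1}. Then: (i) if n_1 < n_2 < … and y* = Σ_i a_i e_{n_i}^* is a spread to the right of x* = Σ_i a_i e_i^* (meaning i ≤ n_i for all i), then ‖y*‖* ≤ ‖x*‖*; consequently ‖Σ_{i∈A} e_i^*‖* ≤ ‖Σ_{i∈B} e_i^*‖* whenever |A| ≤ |B| and max B < min A (the dual system is reverse conservative with constant 1); (ii) ‖Σ_{i=1}^{n!} e_i^*‖* ≥ n and ‖Σ_{i=n!+1}^{2n!} e_i^*‖* = 1 for all n ≥ 1, so the dual system is not democratic. -/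
/-- The family `F = ⋃_{n ≥ 1} F_n`, where `F_n` consists of the finite sets `A` with
`|A| ≤ n!` whose least element is at least `n!`. Here `c₀₀` is modelled as `ℕ →₀ ℝ` with
coordinates indexed from `0`, corresponding to the paper's indices `1, 2, …`; so the
condition `n! ≤ min A` (in paper indexing) reads `n! ≤ i + 1` for all `i ∈ A`. -/
def FF : Set (Finset ℕ) :=
  {A | ∃ n : ℕ, 1 ≤ n ∧ A.card ≤ n.factorial ∧ ∀ i ∈ A, n.factorial ≤ i + 1}

/-- The norm `‖x‖ = sup{∑_{i ∈ A} |x_i| : A ∈ F}` on finitely supported sequences. -/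
noncomputable def normF (x : ℕ →₀ ℝ) : ℝ :=
  sSup {r : ℝ | ∃ A ∈ FF, r = ∑ i ∈ A, |x i|}

/-- Finitely supported functionals `a = ∑ a_i e_i^*` act on `c₀₀` by
`⟨a, x⟩ = ∑ a_i x_i`. -/
noncomputable def pairF (a x : ℕ →₀ ℝ) : ℝ :=
  ∑ i ∈ a.support, a i * x i

/-- The dual norm `‖a‖* = sup{⟨a, x⟩ : x ∈ c₀₀, ‖x‖ ≤ 1}` of a finitely supported
functional. -/
noncomputable def dualNormF (a : ℕ →₀ ℝ) : ℝ :=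
  sSup {r : ℝ | ∃ x : ℕ →₀ ℝ, normF x ≤ 1 ∧ r = pairF a x}

/-- The indicator `∑_{i ∈ A} e_i^*` (as a finitely supported coefficient sequence). -/
noncomputable def indF (A : Finset ℕ) : ℕ →₀ ℝ :=
  ∑ i ∈ A, Finsupp.single i (1 : ℝ)

lemma bddAbove_normF_set (x : ℕ →₀ ℝ) :
    BddAbove {r : ℝ | ∃ A ∈ FF, r = ∑ i ∈ A, |x i|} := by
  refine ⟨∑ i ∈ x.support, |x i|, ?_⟩
  rintro r ⟨A, -, rfl⟩
  calc ∑ i ∈ A, |x i| ≤ ∑ i ∈ A ∪ x.support, |x i| :=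
        Finset.sum_le_sum_of_subset_of_nonneg Finset.subset_union_left fun i _ _ => abs_nonneg _
    _ = ∑ i ∈ x.support, |x i| :=
        (Finset.sum_subset Finset.subset_union_right fun i _ hi => by simpa using hi).symm

lemma normF_le_one_iff (x : ℕ →₀ ℝ) :
    normF x ≤ 1 ↔ ∀ A ∈ FF, ∑ i ∈ A, |x i| ≤ 1 := by
  constructor
  · intro h A hA
    exact (le_csSup (bddAbove_normF_set x) ⟨A, hA, rfl⟩).trans h
  · intro h
    refine csSup_le ⟨0, ∅, ⟨1, le_rfl, by simp, by simp⟩, by simp⟩ ?_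
    rintro r ⟨A, hA, rfl⟩
    exact h A hA

lemma abs_apply_le_one {x : ℕ →₀ ℝ} (hx : normF x ≤ 1) (i : ℕ) : |x i| ≤ 1 := by
  simpa using (normF_le_one_iff x).1 hx {i} ⟨1, le_rfl, by simp, by simp⟩

lemma pairF_le_dualNormF (a : ℕ →₀ ℝ) {x : ℕ →₀ ℝ} (hx : normF x ≤ 1) :
    pairF a x ≤ dualNormF a := by
  refine le_csSup ⟨∑ i ∈ a.support, |a i|, ?_⟩ ⟨x, hx, rfl⟩
  rintro r ⟨y, hy, rfl⟩
  refine Finset.sum_le_sum fun i _ => (le_abs_self _).trans ?_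
  rw [abs_mul]
  exact mul_le_of_le_one_right (abs_nonneg _) (abs_apply_le_one hy i)

lemma dualNormF_le {a : ℕ →₀ ℝ} {c : ℝ}
    (h : ∀ x : ℕ →₀ ℝ, normF x ≤ 1 → pairF a x ≤ c) : dualNormF a ≤ c := by
  refine csSup_le ⟨_, 0, (normF_le_one_iff 0).2 (by simp), rfl⟩ ?_
  rintro r ⟨x, hx, rfl⟩
  exact h x hx

lemma indF_apply (A : Finset ℕ) (i : ℕ) : indF A i = if i ∈ A then 1 else 0 := by
  simp [indF, Finsupp.finsetSum_apply, Finsupp.single_apply]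

lemma pairF_indF (A : Finset ℕ) (x : ℕ →₀ ℝ) : pairF (indF A) x = ∑ i ∈ A, x i := by
  have hsupp : (indF A).support = A := by
    ext i
    simp [indF_apply]
  rw [pairF, hsupp]
  exact Finset.sum_congr rfl fun i hi => by simp [indF_apply, hi]

/-- `FF` is stable under spreading to the right. -/
lemma image_mem_FF {A : Finset ℕ} (hA : A ∈ FF) {g : ℕ → ℕ} (hg : ∀ i ∈ A, i ≤ g i) :
    A.image g ∈ FF := by
  obtain ⟨m, hm, hcard, hmin⟩ := hA
  refine ⟨m, hm, Finset.card_image_le.trans hcard, ?_⟩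
  simp only [Finset.mem_image, forall_exists_index, and_imp, forall_apply_eq_imp_iff₂]
  intro i hi
  have := hmin i hi
  have := hg i hi
  omega

lemma filter_mem_FF {A : Finset ℕ} (hA : A ∈ FF) (p : ℕ → Prop) [DecidablePred p] :
    A.filter p ∈ FF := by
  obtain ⟨m, hm, hcard, hmin⟩ := hA
  exact ⟨m, hm, (Finset.card_filter_le _ _).trans hcard,
    fun i hi => hmin i (Finset.mem_filter.1 hi).1⟩

/-- Pulling a vector of the unit ball back to the left, along an injection `g` of `S` with
`i ≤ g i`, produces a vector of the unit ball. -/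
lemma normF_le_one_of_pullback {S : Finset ℕ} {g : ℕ → ℕ} (hinj : Set.InjOn g S)
    (hg : ∀ i ∈ S, i ≤ g i) {x y : ℕ →₀ ℝ} (hx : normF x ≤ 1)
    (hy : ∀ i ∈ S, |y i| = |x (g i)|) (hy0 : ∀ i ∉ S, y i = 0) : normF y ≤ 1 := by
  rw [normF_le_one_iff] at hx ⊢
  intro A hA
  calc ∑ i ∈ A, |y i| = ∑ i ∈ A.filter (· ∈ S), |y i| := by
        rw [Finset.sum_filter]
        refine Finset.sum_congr rfl fun i _ => ?_
        split_ifs with h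
        · rfl
        · simp [hy0 i h]
    _ = ∑ i ∈ A.filter (· ∈ S), |x (g i)| :=
        Finset.sum_congr rfl fun i hi => hy i (Finset.mem_filter.1 hi).2
    _ = ∑ j ∈ (A.filter (· ∈ S)).image g, |x j| := by
        rw [Finset.sum_image]
        exact hinj.mono fun i hi => (Finset.mem_filter.1 hi).2
    _ ≤ 1 := hx _ (image_mem_FF (filter_mem_FF hA _)
        fun i hi => hg i (Finset.mem_filter.1 hi).2)

lemma exists_finsupp_eqOn (S : Finset ℕ) (f : ℕ → ℝ) :
    ∃ y : ℕ →₀ ℝ, (∀ i ∈ S, y i = f i) ∧ ∀ i ∉ S, y i = 0 := by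
  classical
  refine ⟨Finsupp.onFinset S (fun i => if i ∈ S then f i else 0) (by simp +contextual), ?_, ?_⟩
  · simp +contextual
  · simp +contextual

lemma dualNormF_embDomain_le (a : ℕ →₀ ℝ) (n : ℕ ↪ ℕ) (hn : ∀ i, i ≤ n i) :
    dualNormF (Finsupp.embDomain n a) ≤ dualNormF a := by
  refine dualNormF_le fun x hx => ?_
  obtain ⟨y, hy, hy0⟩ := exists_finsupp_eqOn a.support fun i => x (n i)
  have hpair : pairF (Finsupp.embDomain n a) x = pairF a y := by
    rw [pairF, Finsupp.support_embDomain, Finset.sum_map, pairF]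
    exact Finset.sum_congr rfl fun i hi => by rw [Finsupp.embDomain_apply_self, hy i hi]
  rw [hpair]
  exact pairF_le_dualNormF a (normF_le_one_of_pullback n.injective.injOn (fun i _ => hn i) hx
    (fun i hi => by rw [hy i hi]) hy0)

lemma dualNormF_indF_le_of_lt {A B : Finset ℕ} (hcard : A.card ≤ B.card)
    (hlt : ∀ i ∈ B, ∀ j ∈ A, i < j) : dualNormF (indF A) ≤ dualNormF (indF B) := by
  refine dualNormF_le fun x hx => ?_
  obtain ⟨S, hSB, hS⟩ := Finset.exists_subset_card_eq hcard
  obtain ⟨g, hgbij, hgimage⟩ : ∃ g : ℕ → ℕ, Set.BijOn g S A ∧ S.image g = A := by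
    obtain ⟨g, hg⟩ := (S.finite_toSet).exists_bijOn_of_encard_eq (t := (A : Set ℕ))
      (by simp [hS])
    exact ⟨g, hg, by exact_mod_cast hg.image_eq⟩
  obtain ⟨y, hy, hy0⟩ := exists_finsupp_eqOn S fun i => |x (g i)|
  have hy1 : normF y ≤ 1 := normF_le_one_of_pullback hgbij.injOn
    (fun i hi => (hlt i (hSB hi) (g i) (hgbij.mapsTo hi)).le) hx
    (fun i hi => by rw [hy i hi, abs_abs]) hy0
  refine le_trans ?_ (pairF_le_dualNormF (indF B) hy1)
  rw [pairF_indF, pairF_indF, ← Finset.sum_subset hSB fun i _ hi => hy0 i hi,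
    Finset.sum_congr rfl hy, ← hgimage, Finset.sum_image hgbij.injOn]
  exact Finset.sum_le_sum fun i _ => le_abs_self _

/-- The reciprocal of the largest factorial not exceeding `j + 1`. -/
noncomputable def factorialWeight (j : ℕ) : ℝ :=
  ((Nat.findGreatest (fun k => k.factorial ≤ j + 1) (j + 1)).factorial : ℝ)⁻¹

lemma factorialWeight_nonneg (j : ℕ) : 0 ≤ factorialWeight j := by
  unfold factorialWeight
  positivity

lemma factorialWeight_le {m j : ℕ} (h : m.factorial ≤ j + 1) :
    factorialWeight j ≤ (m.factorial : ℝ)⁻¹ := by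
  unfold factorialWeight
  have hm : m ≤ Nat.findGreatest (fun k => k.factorial ≤ j + 1) (j + 1) :=
    Nat.le_findGreatest (m.self_le_factorial.trans h) h
  have := Nat.factorial_le hm
  gcongr

lemma le_factorialWeight {k j : ℕ} (h : j + 1 < (k + 1).factorial) :
    (k.factorial : ℝ)⁻¹ ≤ factorialWeight j := by
  unfold factorialWeight
  have hspec := Nat.findGreatest_spec (P := fun k => k.factorial ≤ j + 1)
    (Nat.zero_le (j + 1)) (by simp)
  have hle : Nat.findGreatest (fun k => k.factorial ≤ j + 1) (j + 1) ≤ k := by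
    by_contra! hlt
    exact absurd (h.trans_le (Nat.factorial_le hlt)) (not_lt.2 hspec)
  have := Nat.factorial_le hle
  gcongr

lemma le_sum_factorialWeight (k : ℕ) :
    (k * (k + 1) / 2 : ℝ) ≤ ∑ j ∈ Finset.range ((k + 1).factorial - 1), factorialWeight j := by
  induction k with
  | zero => simp
  | succ k ih =>
    have h1 := Nat.factorial_pos (k + 1)
    have hmono : (k + 1).factorial ≤ (k + 2).factorial := Nat.factorial_le (by omega)
    rw [← Finset.sum_range_add_sum_Ico _ (Nat.sub_le_sub_right hmono 1)]
    have hblock : (k + 1 : ℝ) ≤ ∑ j ∈ Finset.Ico ((k + 1).factorial - 1)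
        ((k + 2).factorial - 1), factorialWeight j := by
      have hb := Finset.card_nsmul_le_sum (Finset.Ico ((k + 1).factorial - 1)
        ((k + 2).factorial - 1)) factorialWeight (((k + 1).factorial : ℝ)⁻¹) fun j hj =>
          le_factorialWeight (k := k + 1) (by
            have := (Finset.mem_Ico.1 hj).2
            change j + 1 < (k + 2).factorial
            omega)
      have hcard : (k + 2).factorial - 1 - ((k + 1).factorial - 1)
          = (k + 1) * (k + 1).factorial := by
        have : (k + 2).factorial = (k + 1) * (k + 1).factorial + (k + 1).factorial := by
          rw [Nat.factorial_succ (k + 1)]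
          ring
        omega
      rw [Nat.card_Ico, hcard, nsmul_eq_mul] at hb
      refine le_trans (le_of_eq ?_) hb
      have : ((k + 1).factorial : ℝ) ≠ 0 := by positivity
      push_cast
      field_simp
    push_cast
    linarith

lemma sum_le_one_of_le_inv_factorial {f : ℕ → ℝ}
    (hf : ∀ m j : ℕ, m.factorial ≤ j + 1 → f j ≤ (m.factorial : ℝ)⁻¹) {A : Finset ℕ}
    (hA : A ∈ FF) : ∑ i ∈ A, f i ≤ 1 := by
  obtain ⟨m, -, hcard, hmin⟩ := hA
  have hpos : (0 : ℝ) < m.factorial := by positivity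
  calc ∑ i ∈ A, f i ≤ A.card • (m.factorial : ℝ)⁻¹ :=
        Finset.sum_le_card_nsmul _ _ _ fun i hi => hf m i (hmin i hi)
    _ ≤ 1 := by
        rw [nsmul_eq_mul, ← div_eq_mul_inv, div_le_one hpos]
        exact_mod_cast hcard

lemma two_le_dualNormF_indF_range_two : 2 ≤ dualNormF (indF (Finset.range 2)) := by
  have hnorm : normF (indF (Finset.range 2)) ≤ 1 := by
    rw [normF_le_one_iff]
    rintro A ⟨m, -, hcard, hmin⟩
    have hsum : ∑ i ∈ A, |indF (Finset.range 2) i| = ((A.filter (· < 2)).card : ℝ) := by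
      rw [Finset.card_filter]
      push_cast
      exact Finset.sum_congr rfl fun i _ => by
        rw [indF_apply]
        split_ifs <;> simp_all
    rw [hsum]
    norm_cast
    rcases Nat.lt_or_ge m.factorial 2 with hm | hm
    · exact (Finset.card_filter_le _ _).trans (by omega)
    · refine Finset.card_le_one.2 fun i hi j hj => ?_
      rw [Finset.mem_filter] at hi hj
      have := hmin i hi.1
      have := hmin j hj.1
      omega
  have := pairF_le_dualNormF (indF (Finset.range 2)) hnorm
  rw [pairF_indF] at this
  norm_num [Finset.sum_range_succ, indF_apply] at this
  exact this

lemma normF_single_le_one (i : ℕ) : normF (Finsupp.single i 1) ≤ 1 := by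
  rw [normF_le_one_iff]
  intro A _
  have (j : ℕ) : |Finsupp.single i (1 : ℝ) j| = if i = j then 1 else 0 := by
    rw [Finsupp.single_apply]
    split_ifs <;> simp
  simp only [this, Finset.sum_ite_eq]
  split_ifs <;> simp

lemma one_le_dualNormF_indF {A : Finset ℕ} (hA : A.Nonempty) : 1 ≤ dualNormF (indF A) := by
  obtain ⟨i, hi⟩ := hA
  have := pairF_le_dualNormF (indF A) (normF_single_le_one i)
  simpa [pairF_indF, Finsupp.single_apply, hi] using this

lemma dualNormF_indF_eq_one {A : Finset ℕ} (hA : A ∈ FF) (hne : A.Nonempty) :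
    dualNormF (indF A) = 1 := by
  refine le_antisymm (dualNormF_le fun x hx => ?_) (one_le_dualNormF_indF hne)
  rw [pairF_indF]
  exact (Finset.sum_le_sum fun i _ => le_abs_self _).trans ((normF_le_one_iff x).1 hx A hA)

lemma le_dualNormF_indF_range_factorial {n : ℕ} (hn : 1 ≤ n) :
    (n : ℝ) ≤ dualNormF (indF (Finset.range n.factorial)) := by
  obtain rfl | rfl | hn3 : n = 1 ∨ n = 2 ∨ 3 ≤ n := by omega
  · simpa using one_le_dualNormF_indF (A := Finset.range 1) (by simp)
  · exact_mod_cast two_le_dualNormF_indF_range_two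
  · obtain ⟨k, rfl⟩ : ∃ k, n = k + 1 := ⟨n - 1, by omega⟩
    obtain ⟨y, hy, hy0⟩ := exists_finsupp_eqOn (Finset.range (k + 1).factorial) factorialWeight
    have hy1 : normF y ≤ 1 := by
      refine (normF_le_one_iff y).2 fun A hA =>
        sum_le_one_of_le_inv_factorial (fun m j h => ?_) hA
      by_cases hj : j ∈ Finset.range (k + 1).factorial
      · rw [hy j hj, abs_of_nonneg (factorialWeight_nonneg j)]
        exact factorialWeight_le h
      · rw [hy0 j hj, abs_zero]
        positivity
    have hk : (2 : ℝ) ≤ k := by exact_mod_cast (by omega : 2 ≤ k)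
    calc ((k + 1 : ℕ) : ℝ) ≤ k * (k + 1) / 2 := by
          push_cast
          nlinarith
      _ ≤ ∑ j ∈ Finset.range ((k + 1).factorial - 1), factorialWeight j :=
          le_sum_factorialWeight k
      _ ≤ ∑ j ∈ Finset.range (k + 1).factorial, factorialWeight j :=
          Finset.sum_le_sum_of_subset_of_nonneg (Finset.range_mono (Nat.sub_le _ _))
            fun j _ _ => factorialWeight_nonneg j
      _ = pairF (indF (Finset.range (k + 1).factorial)) y := by
          rw [pairF_indF, Finset.sum_congr rfl hy]
      _ ≤ _ := pairF_le_dualNormF _ hy1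

lemma dualNormF_indF_Ico_factorial {n : ℕ} (hn : 1 ≤ n) :
    dualNormF (indF (Finset.Ico n.factorial (2 * n.factorial))) = 1 := by
  have := n.factorial_pos
  refine dualNormF_indF_eq_one ⟨n, hn, ?_, fun i hi => ?_⟩ ?_
  · rw [Nat.card_Ico]
    omega
  · exact (Finset.mem_Ico.1 hi).1.trans (Nat.le_succ i)
  · exact Finset.nonempty_Ico.2 (by omega)

/-- For the dual norm of `normF`: (i) spreading a functional to the
right does not increase its dual norm (if `n` is strictly monotone, so `i ≤ n i`, then
`‖∑ a_i e_{n_i}^*‖* ≤ ‖∑ a_i e_i^*‖*`); consequently the dual system is reverse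
conservative with constant `1`; (ii) `‖∑_{i=1}^{n!} e_i^*‖* ≥ n` and
`‖∑_{i=n!+1}^{2n!} e_i^*‖* = 1` for all `n ≥ 1` (paper indexing, shifted down by one
here), so the dual system is not democratic. -/
theorem stmt_3 :
    (∀ (a : ℕ →₀ ℝ) (n : ℕ → ℕ) (hn : StrictMono n) (_ : ∀ i : ℕ, i ≤ n i),
      dualNormF (Finsupp.embDomain ⟨n, hn.injective⟩ a) ≤ dualNormF a) ∧
    (∀ A B : Finset ℕ, A.card ≤ B.card → (∀ i ∈ B, ∀ j ∈ A, i < j) →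
      dualNormF (indF A) ≤ dualNormF (indF B)) ∧
    (∀ n : ℕ, 1 ≤ n →
      (n : ℝ) ≤ dualNormF (indF (Finset.range n.factorial)) ∧
      dualNormF (indF (Finset.Ico n.factorial (2 * n.factorial))) = 1) ∧
    ¬ ∃ Γ : ℝ, ∀ A B : Finset ℕ, A.card ≤ B.card →
        dualNormF (indF A) ≤ Γ * dualNormF (indF B) := by
  refine ⟨fun a n hn h => dualNormF_embDomain_le a _ h, fun A B => dualNormF_indF_le_of_lt,
    fun n hn => ⟨le_dualNormF_indF_range_factorial hn, dualNormF_indF_Ico_factorial hn⟩, ?_⟩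
  rintro ⟨Γ, hΓ⟩
  obtain ⟨n, hn⟩ := exists_nat_gt Γ
  have hn1 : 1 ≤ n + 1 := by omega
  have h := hΓ (Finset.range (n + 1).factorial)
    (Finset.Ico (n + 1).factorial (2 * (n + 1).factorial)) (by
      rw [Finset.card_range, Nat.card_Ico]
      omega)
  rw [dualNormF_indF_Ico_factorial hn1] at h
  have := le_dualNormF_indF_range_factorial hn1
  push_cast at this
  linarith
end

section
/- Let X be a real Banach space with a Schauder basis (e_n). Then (e_n) is quasi-greedy and reverse conservative if and only if there exists a constant C such that ‖x − G_m(x)‖ ≤ C‖x − Σ_{i∈A} a_i e_i‖ for all x ∈ X, all m ∈ ℕ, every greedy ordering for x, every finite set A ⊂ ℕ with |A| = m and min A > β_m(x), and all real scalars (a_i)_{i∈A} (i.e., ‖x − G_m(x)‖ ≤ C·σ^R_m(x)). -/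
open Filter Topology

namespace SchauderBasisSys

variable {X : Type*} [NormedAddCommGroup X] [NormedSpace ℝ X]

/-- Every coordinate of `x` in `D` dominates in absolute value every coordinate outside `D`. -/
def IsGreedySet (S : SchauderBasisSys X) (x : X) (D : Finset ℕ) : Prop :=
  ∀ i ∈ D, ∀ j ∉ D, |S.f j x| ≤ |S.f i x|

lemma f_sum (S : SchauderBasisSys X) (A : Finset ℕ) (a : ℕ → ℝ) (j : ℕ) :
    S.f j (∑ i ∈ A, a i • S.e i) = if j ∈ A then a j else 0 := by
  simp [map_sum, S.biorth]

lemma f_P (S : SchauderBasisSys X) (A : Finset ℕ) (x : X) (j : ℕ) :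
    S.f j (S.P A x) = if j ∈ A then S.f j x else 0 :=
  S.f_sum A (fun i => S.f i x) j

lemma G_eq_P_Lam (S : SchauderBasisSys X) (x : X) {ρ : ℕ → ℕ} (hρ : Function.Injective ρ)
    (m : ℕ) : S.G x ρ m = S.P (Lam ρ m) x := by
  unfold G P Lam
  rw [Finset.sum_image (fun _ _ _ _ h => hρ h)]

lemma IsGreedyOrdering.isGreedySet_Lam {S : SchauderBasisSys X} {x : X} {ρ : ℕ → ℕ}
    (h : S.IsGreedyOrdering x ρ) (m : ℕ) : S.IsGreedySet x (Lam ρ m) := by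
  intro i hi j hj
  simp only [Lam, Finset.mem_image, Finset.mem_range, not_exists, not_and] at hi hj
  obtain ⟨k, hk, rfl⟩ := hi
  by_cases h0 : S.f j x = 0
  · simp [h0]
  · obtain ⟨l, rfl⟩ := h.2.1 j h0
    exact h.2.2 k l (by by_contra hl; exact hj l (by omega) rfl)

/-- A greedy set of a finitely supported vector is an initial segment of a greedy ordering. -/
lemma exists_isGreedyOrdering_Lam_eq (S : SchauderBasisSys X) {x : X} {N : ℕ}
    (hx : ∀ n, N ≤ n → S.f n x = 0) {D : Finset ℕ} (hDN : D ⊆ Finset.range N)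
    (hD : S.IsGreedySet x D) : ∃ ρ, S.IsGreedyOrdering x ρ ∧ Lam ρ D.card = D := by
  let key : Fin N → ℕ ×ₗ ℝ := fun i => toLex (if (i : ℕ) ∈ D then 0 else 1, -|S.f i x|)
  let σ := Tuple.sort key
  let ρ : ℕ → ℕ := fun n => if h : n < N then (σ ⟨n, h⟩ : ℕ) else n
  have hρ_lt : ∀ n (h : n < N), ρ n = σ ⟨n, h⟩ := fun n h => dif_pos h
  have hρ_ge : ∀ n, ¬ n < N → ρ n = n := fun n h => dif_neg h
  have hsort : ∀ j k, j ≤ k → k < N →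
      (ρ k ∈ D → ρ j ∈ D) ∧ |S.f (ρ k) x| ≤ |S.f (ρ j) x| := by
    intro j k hjk hk
    have hj := hjk.trans_lt hk
    have hmono : key (σ ⟨j, hj⟩) ≤ key (σ ⟨k, hk⟩) := Tuple.monotone_sort key hjk
    simp only [key, Prod.Lex.toLex_le_toLex, ← hρ_lt] at hmono
    by_cases h1 : ρ j ∈ D <;> by_cases h2 : ρ k ∈ D <;> simp [h1, h2] at hmono ⊢
    · exact hmono
    · exact hD _ h1 _ h2
    · exact hmono
  have hinj : Function.Injective ρ := by
    intro a b hab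
    by_cases ha : a < N <;> by_cases hb : b < N
    · rw [hρ_lt a ha, hρ_lt b hb] at hab
      simpa using σ.injective (Fin.ext hab)
    · rw [hρ_lt a ha, hρ_ge b hb] at hab
      have := (σ ⟨a, ha⟩).2
      omega
    · rw [hρ_ge a ha, hρ_lt b hb] at hab
      have := (σ ⟨b, hb⟩).2
      omega
    · rwa [hρ_ge a ha, hρ_ge b hb] at hab
  have hsurj : ∀ n, n < N → ∃ k, k < N ∧ ρ k = n := by
    intro n hn
    refine ⟨σ.symm ⟨n, hn⟩, (σ.symm ⟨n, hn⟩).2, ?_⟩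
    rw [hρ_lt _ (σ.symm ⟨n, hn⟩).2]
    simp
  refine ⟨ρ, ⟨hinj, ?_, ?_⟩, ?_⟩
  · intro n hn
    obtain ⟨k, -, hk⟩ := hsurj n (by by_contra h; exact hn (hx n (by omega)))
    exact ⟨k, hk⟩
  · intro j k hjk
    by_cases hk : k < N
    · exact (hsort j k hjk hk).2
    · rw [hρ_ge k hk, hx k (by omega)]
      simp
  · refine Finset.eq_of_subset_of_card_le ?_ ?_
    · intro i hi
      simp only [Lam, Finset.mem_image, Finset.mem_range] at hi
      obtain ⟨k, hk, rfl⟩ := hi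
      by_contra hkD
      have hsub : D ⊆ Lam ρ k := by
        intro d hd
        obtain ⟨l, hl, rfl⟩ := hsurj d (by simpa using hDN hd)
        refine Finset.mem_image_of_mem _ (Finset.mem_range.2 ?_)
        by_contra hkl
        exact hkD ((hsort k l (by omega) hl).1 hd)
      have h1 := Finset.card_le_card hsub
      have h2 : (Lam ρ k).card ≤ k := Finset.card_image_le.trans (by simp)
      omega
    · rw [Lam, Finset.card_image_of_injective _ hinj, Finset.card_range]

/-- In a quasi-greedy basis, projections onto greedy sets are uniformly bounded. -/
lemma QuasiGreedy.exists_norm_P_le {S : SchauderBasisSys X} (h : S.QuasiGreedy) :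
    ∃ K : ℝ, 0 ≤ K ∧ ∀ (x : X) (D : Finset ℕ), S.IsGreedySet x D → ‖S.P D x‖ ≤ K * ‖x‖ := by
  obtain ⟨K, hK⟩ := h
  refine ⟨|K|, abs_nonneg K, fun x D hD => ?_⟩
  have hlim := (S.expansion x).norm.const_mul |K|
  refine ge_of_tendsto hlim ?_
  filter_upwards [eventually_ge_atTop (D.sup id + 1)] with N hN
  have hDN : D ⊆ Finset.range N := fun i hi => by
    have : i ≤ D.sup id := Finset.le_sup (f := id) hi
    simp only [Finset.mem_range]
    omega
  change _ ≤ |K| * ‖S.P (Finset.range N) x‖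
  have hgreedy : S.IsGreedySet (S.P (Finset.range N) x) D := by
    intro i hi j hj
    rw [S.f_P, S.f_P, if_pos (hDN hi)]
    split_ifs
    · exact hD i hi j hj
    · simp
  obtain ⟨ρ, hρ, hLam⟩ := S.exists_isGreedyOrdering_Lam_eq (N := N)
    (fun n hn => by rw [S.f_P, if_neg (by simpa using hn)]) hDN hgreedy
  have hG := hK _ ρ D.card hρ
  rw [S.G_eq_P_Lam _ hρ.1, hLam] at hG
  have hP : S.P D (S.P (Finset.range N) x) = S.P D x :=
    Finset.sum_congr rfl fun i hi => by rw [S.f_P, if_pos (hDN hi)]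
  rw [hP] at hG
  exact hG.trans (mul_le_mul_of_nonneg_right (le_abs_self K) (norm_nonneg _))

/-- The partial-sum projections of a Schauder basis of a Banach space are uniformly bounded. -/
lemma exists_norm_P_range_le [CompleteSpace X] (S : SchauderBasisSys X) :
    ∃ b : ℝ, 0 ≤ b ∧ ∀ (N : ℕ) (x : X), ‖S.P (Finset.range N) x‖ ≤ b * ‖x‖ := by
  let T : ℕ → X →L[ℝ] X := fun N => ∑ n ∈ Finset.range N, (S.f n).smulRight (S.e n)
  have hT : ∀ N x, T N x = S.P (Finset.range N) x := fun N x => by simp [T, P]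
  obtain ⟨b, hb⟩ := banach_steinhaus (g := T) fun x => by
    obtain ⟨c, hc⟩ := (S.expansion x).norm.bddAbove_range
    exact ⟨c, fun N => by rw [hT]; exact hc ⟨N, rfl⟩⟩
  refine ⟨b, (norm_nonneg _).trans (hb 0), fun N x => ?_⟩
  rw [← hT]
  exact (T N).le_of_opNorm_le (hb N) x

/-- Layer-cake bound: a nonnegative combination is controlled by the sums over the superlevel
sets of its coefficients. -/
lemma norm_sum_smul_le_of_superlevel [CompleteSpace X] (A : Finset ℕ) (v : ℕ → X)
    (c : ℕ → ℝ) {T M : ℝ} (hT : 0 ≤ T) (hc : ∀ i ∈ A, 0 ≤ c i ∧ c i ≤ T)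
    (hM : ∀ s, 0 < s → ‖∑ i ∈ A with s ≤ c i, v i‖ ≤ M) :
    ‖∑ i ∈ A, c i • v i‖ ≤ T * M := by
  have hint : ∀ i ∈ A, IntervalIntegrable
      (fun s => Set.indicator {s | s ≤ c i} (fun _ => v i) s) MeasureTheory.volume 0 T := by
    intro i _
    rw [intervalIntegrable_iff]
    exact (intervalIntegrable_iff.1 intervalIntegrable_const).indicator measurableSet_Iic
  have hsum : ∑ i ∈ A, c i • v i =
      ∫ s in (0 : ℝ)..T, ∑ i ∈ A, Set.indicator {s | s ≤ c i} (fun _ => v i) s := by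
    rw [intervalIntegral.integral_finsetSum hint]
    refine Finset.sum_congr rfl fun i hi => ?_
    rw [intervalIntegral.integral_indicator (hc i hi), intervalIntegral.integral_const, sub_zero]
  rw [hsum]
  refine (intervalIntegral.norm_integral_le_of_norm_le_const (C := M) fun s hs => ?_).trans ?_
  · rw [Set.uIoc_of_le hT] at hs
    simpa [Finset.sum_filter, Set.indicator_apply] using hM s hs.1
  · rw [sub_zero, abs_of_nonneg hT, mul_comm]

/-- Coefficients bounded by `T` give a sum bounded by `2T` times the largest indicator vector. -/
lemma norm_sum_le_of_norm_ind_le [CompleteSpace X] (S : SchauderBasisSys X) (A : Finset ℕ)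
    (c : ℕ → ℝ) {T M : ℝ} (hT : 0 ≤ T) (hc : ∀ i ∈ A, |c i| ≤ T)
    (hM : ∀ B ⊆ A, ‖S.ind B‖ ≤ M) : ‖∑ i ∈ A, c i • S.e i‖ ≤ 2 * T * M := by
  have hsplit : ∑ i ∈ A, c i • S.e i =
      ∑ i ∈ A, max (c i) 0 • S.e i - ∑ i ∈ A, max (-c i) 0 • S.e i := by
    rw [← Finset.sum_sub_distrib]
    refine Finset.sum_congr rfl fun i _ => ?_
    rw [← sub_smul]
    congr 1
    rcases le_total (c i) 0 with h | h
    · rw [max_eq_right h, max_eq_left (by linarith)]; ring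
    · rw [max_eq_left h, max_eq_right (by linarith)]; ring
  have hpos := norm_sum_smul_le_of_superlevel A S.e (fun i => max (c i) 0) hT
    (fun i hi => ⟨le_max_right _ _, max_le ((le_abs_self _).trans (hc i hi)) hT⟩)
    (fun s _ => hM _ (Finset.filter_subset _ _))
  have hneg := norm_sum_smul_le_of_superlevel A S.e (fun i => max (-c i) 0) hT
    (fun i hi => ⟨le_max_right _ _, max_le ((neg_le_abs _).trans (hc i hi)) hT⟩)
    (fun s _ => hM _ (Finset.filter_subset _ _))
  rw [hsplit]
  refine (norm_sub_le _ _).trans ?_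
  linarith

/-- If projections onto greedy sets are bounded by `K`, then a vector whose coordinates on `Λ` are
at least `t` in absolute value controls `t • 1_Λ`. -/
lemma mul_norm_ind_le [CompleteSpace X] (S : SchauderBasisSys X) {K : ℝ} (hK0 : 0 ≤ K)
    (hK : ∀ (x : X) (D : Finset ℕ), S.IsGreedySet x D → ‖S.P D x‖ ≤ K * ‖x‖)
    (L : Finset ℕ) (z : X) {t : ℝ} (ht : 0 ≤ t) (hz : ∀ i ∈ L, t ≤ |S.f i z|) :
    t * ‖S.ind L‖ ≤ 2 * K * (1 + K) * ‖S.P L z‖ := by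
  rcases ht.eq_or_lt with rfl | ht
  · rw [zero_mul]; positivity
  have hpos : ∀ i ∈ L, 0 < |S.f i z| := fun i hi => ht.trans_le (hz i hi)
  set ε : ℕ → ℝ := fun i => t / |S.f i z| * S.f i z with hε
  have hε_abs : ∀ i ∈ L, |ε i| = t := fun i hi => by
    rw [hε, abs_mul, abs_div, abs_abs, abs_of_pos ht, div_mul_cancel₀ _ (hpos i hi).ne']
  set u := ∑ i ∈ L, ε i • S.e i with hu
  have hu_norm : ‖u‖ ≤ (1 + K) * ‖S.P L z‖ := by
    have hlayer := norm_sum_smul_le_of_superlevel L (fun i => S.f i z • S.e i)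
      (fun i => t / |S.f i z|) (T := 1) (M := (1 + K) * ‖S.P L z‖) zero_le_one
      (fun i hi => ⟨by positivity, (div_le_one (hpos i hi)).2 (hz i hi)⟩) (fun s _ => by
        have hgreedy : S.IsGreedySet (S.P L z) {i ∈ L | ¬ s ≤ t / |S.f i z|} := by
          intro i hi j hj
          simp only [Finset.mem_filter, not_and, not_le, not_lt] at hi hj
          rw [S.f_P, S.f_P, if_pos hi.1]
          split_ifs with hjL
          · have hlt := hi.2.trans_le (hj hjL)
            exact ((div_lt_div_iff_of_pos_left ht (hpos i hi.1) (hpos j hjL)).1 hlt).le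
          · simp
        have hproj : S.P {i ∈ L | ¬ s ≤ t / |S.f i z|} (S.P L z) =
            ∑ i ∈ L with ¬ s ≤ t / |S.f i z|, S.f i z • S.e i :=
          Finset.sum_congr rfl fun i hi => by
            rw [S.f_P, if_pos (Finset.filter_subset _ _ hi)]
        have hle := hK _ _ hgreedy
        rw [hproj] at hle
        have hadd := Finset.sum_filter_add_sum_filter_not L (fun i => s ≤ t / |S.f i z|)
          (fun i => S.f i z • S.e i)
        rw [eq_sub_of_add_eq hadd]
        refine (norm_sub_le _ _).trans ?_
        change ‖S.P L z‖ + _ ≤ _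
        linarith)
    simpa [hu, hε, smul_smul] using hlayer
  have hpart : ∀ (B : Finset ℕ) (r : ℝ), B ⊆ L → |r| = t → (∀ i ∈ B, ε i = r) →
      t * ‖S.ind B‖ ≤ K * ‖u‖ := by
    intro B r hB hr hεB
    have hgreedy : S.IsGreedySet u B := by
      intro i hi j _
      rw [hu, S.f_sum, S.f_sum, if_pos (hB hi), hε_abs i (hB hi)]
      split_ifs with hj
      · exact (hε_abs j hj).le
      · simpa using ht.le
    have hproj : S.P B u = r • S.ind B := by
      rw [ind, Finset.smul_sum]
      exact Finset.sum_congr rfl fun i hi => by rw [hu, S.f_sum, if_pos (hB hi), hεB i hi]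
    have hle := hK _ _ hgreedy
    rwa [hproj, norm_smul, Real.norm_eq_abs, hr] at hle
  have h1 := hpart {i ∈ L | 0 ≤ ε i} t (Finset.filter_subset _ _) (abs_of_pos ht)
    (fun i hi => by
      obtain ⟨hi, h⟩ := Finset.mem_filter.1 hi
      rw [← hε_abs i hi, abs_of_nonneg h])
  have h2 := hpart {i ∈ L | ¬ 0 ≤ ε i} (-t) (Finset.filter_subset _ _)
    (by rw [abs_neg, abs_of_pos ht])
    (fun i hi => by
      obtain ⟨hi, h⟩ := Finset.mem_filter.1 hi
      rw [← hε_abs i hi, abs_of_neg (not_le.1 h), neg_neg])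
  have hadd : S.ind L = S.ind {i ∈ L | 0 ≤ ε i} + S.ind {i ∈ L | ¬ 0 ≤ ε i} :=
    (Finset.sum_filter_add_sum_filter_not L (fun i => 0 ≤ ε i) S.e).symm
  have htri := mul_le_mul_of_nonneg_left
    (norm_add_le (S.ind {i ∈ L | 0 ≤ ε i}) (S.ind {i ∈ L | ¬ 0 ≤ ε i})) ht.le
  rw [← hadd] at htri
  have := mul_le_mul_of_nonneg_left hu_norm hK0
  nlinarith

/-- A finite set of natural numbers can be enlarged to any larger cardinality by adding elements
beyond any given bound. -/
lemma exists_superset_card_eq_of_lt (A : Finset ℕ) (N : ℕ) {m : ℕ} (h : A.card ≤ m) :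
    ∃ A', A ⊆ A' ∧ A'.card = m ∧ ∀ i ∈ A', i ∉ A → N < i := by
  let M := max N (A.sup id)
  refine ⟨A ∪ Finset.Ioc M (M + (m - A.card)), Finset.subset_union_left, ?_, ?_⟩
  · rw [Finset.card_union_of_disjoint, Nat.card_Ioc]
    · omega
    · refine Finset.disjoint_left.2 fun i hi hi' => ?_
      have : i ≤ A.sup id := Finset.le_sup (f := id) hi
      have := (Finset.mem_Ioc.1 hi').1
      omega
  · intro i hi hiA
    have := (Finset.mem_Ioc.1 ((Finset.mem_union.1 hi).resolve_left hiA)).1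
    omega

/-- Greedy approximation is dominated by approximation from later indices when the basis is
quasi-greedy and reverse conservative. -/
lemma exists_norm_sub_G_le [CompleteSpace X] (S : SchauderBasisSys X) (hQ : S.QuasiGreedy)
    (hR : S.ReverseConservative) :
    ∃ C : ℝ, ∀ (x : X) (ρ : ℕ → ℕ) (m : ℕ) (A : Finset ℕ) (a : ℕ → ℝ),
      S.IsGreedyOrdering x ρ → A.card = m →
      (∀ i ∈ A, ∀ j ∈ Lam ρ m, j < i) →
      ‖x - S.G x ρ m‖ ≤ C * ‖x - ∑ i ∈ A, a i • S.e i‖ := by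
  obtain ⟨K, hK0, hK⟩ := hQ.exists_norm_P_le
  obtain ⟨b, hb0, hb⟩ := S.exists_norm_P_range_le
  obtain ⟨Γ, hΓ⟩ := hR
  refine ⟨1 + K + 4 * (|Γ| * (2 * K * (1 + K) * (K * b))), fun x ρ m A a hρ hA hlt => ?_⟩
  rw [S.G_eq_P_Lam x hρ.1]
  have hΛcard : (Lam ρ m).card = m := by
    rw [Lam, Finset.card_image_of_injective _ hρ.1, Finset.card_range]
  have hΛ := hρ.isGreedySet_Lam m
  obtain ⟨t, ht0, htΛ, htc⟩ : ∃ t : ℝ, 0 ≤ t ∧ (∀ i ∈ Lam ρ m, t ≤ |S.f i x|) ∧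
      (0 < m → ∀ j ∉ Lam ρ m, |S.f j x| ≤ t) := by
    rcases (Lam ρ m).eq_empty_or_nonempty with h | h
    · exact ⟨0, le_rfl, by simp [h], fun hm => by simp [h] at hΛcard; omega⟩
    · obtain ⟨i, hi, hmin⟩ := (Lam ρ m).exists_min_image (fun i => |S.f i x|) h
      exact ⟨|S.f i x|, abs_nonneg _, hmin, fun _ j hj => hΛ i hi j hj⟩
  set Λ := Lam ρ m
  set y := x - ∑ i ∈ A, a i • S.e i with hy
  have hfy : ∀ j, S.f j y = S.f j x - if j ∈ A then a j else 0 := fun j => by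
    rw [hy, map_sub, S.f_sum]
  have hAΛ : ∀ i ∈ A, i ∉ Λ := fun i hi hi' => lt_irrefl _ (hlt i hi i hi')
  have hfyΛ : ∀ i ∈ Λ, S.f i y = S.f i x := fun i hi => by
    rw [hfy, if_neg fun h => hAΛ i h hi, sub_zero]
  have hind : t * ‖S.ind Λ‖ ≤ 2 * K * (1 + K) * (K * b) * ‖y‖ := by
    have h1 := S.mul_norm_ind_le hK0 hK Λ y ht0 (fun i hi => by rw [hfyΛ i hi]; exact htΛ i hi)
    let N := Λ.sup id + 1
    have hΛN : ∀ i ∈ Λ, i ∈ Finset.range N := fun i hi => by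
      have : i ≤ Λ.sup id := Finset.le_sup (f := id) hi
      simp only [Finset.mem_range, N]
      omega
    have hgreedy : S.IsGreedySet (S.P (Finset.range N) y) Λ := by
      intro i hi j hj
      rw [S.f_P, S.f_P, if_pos (hΛN i hi), hfyΛ i hi]
      split_ifs with hjN
      · have hjA : j ∉ A := fun hjA => by
          have : Λ.sup id < j :=
            (Finset.sup_lt_iff ((Nat.zero_le i).trans_lt (hlt j hjA i hi))).2 (hlt j hjA)
          simp only [Finset.mem_range, N] at hjN
          omega
        rw [hfy, if_neg hjA, sub_zero]
        exact hΛ i hi j hj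
      · simp
    have hproj : S.P Λ (S.P (Finset.range N) y) = S.P Λ y :=
      Finset.sum_congr rfl fun i hi => by rw [S.f_P, if_pos (hΛN i hi)]
    have h2 := hK _ _ hgreedy
    rw [hproj] at h2
    have h3 : ‖S.P Λ y‖ ≤ K * (b * ‖y‖) :=
      h2.trans (mul_le_mul_of_nonneg_left (hb N y) hK0)
    calc t * ‖S.ind Λ‖ ≤ 2 * K * (1 + K) * ‖S.P Λ y‖ := h1
      _ ≤ 2 * K * (1 + K) * (K * (b * ‖y‖)) := by gcongr
      _ = _ := by ring
  let D := Λ ∪ {i ∈ A | t ≤ |S.f i y|}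
  have hD : S.IsGreedySet y D := by
    intro i hi j hj
    simp only [D, Finset.mem_union, Finset.mem_filter, not_or, not_and, not_le] at hi hj
    have hti : t ≤ |S.f i y| := by
      rcases hi with hi | hi
      · rw [hfyΛ i hi]; exact htΛ i hi
      · exact hi.2
    refine le_trans ?_ hti
    by_cases hjA : j ∈ A
    · exact (hj.2 hjA).le
    · have hm : 0 < m := by
        rcases hi with hi | hi
        · exact hΛcard ▸ Finset.card_pos.2 ⟨i, hi⟩
        · exact hA ▸ Finset.card_pos.2 ⟨i, hi.1⟩
      rw [hfy, if_neg hjA, sub_zero]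
      exact htc hm j hj.1
  let c : ℕ → ℝ := fun i => a i + if t ≤ |S.f i y| then S.f i y else 0
  have hdecomp : x - S.P Λ x = y - S.P D y + ∑ i ∈ A, c i • S.e i := by
    have hPD : S.P D y = S.P Λ x + ∑ i ∈ A, (if t ≤ |S.f i y| then S.f i y else 0) • S.e i := by
      rw [P, Finset.sum_union]
      · congr 1
        · exact Finset.sum_congr rfl fun i hi => by rw [hfyΛ i hi]
        · rw [Finset.sum_filter]
          exact Finset.sum_congr rfl fun i _ => by split_ifs <;> simp
      · exact Finset.disjoint_right.2 fun i hi => hAΛ i (Finset.filter_subset _ _ hi)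
    have hxy : x = y + ∑ i ∈ A, a i • S.e i := (sub_add_cancel _ _).symm
    simp only [hPD, c, add_smul, Finset.sum_add_distrib]
    nth_rewrite 1 [hxy]
    abel
  have hc : ∀ i ∈ A, |c i| ≤ 2 * t := by
    intro i hi
    have hxi := htc (hA ▸ Finset.card_pos.2 ⟨i, hi⟩) i (hAΛ i hi)
    have hyi := hfy i
    rw [if_pos hi] at hyi
    simp only [c]
    split_ifs with h
    · rw [hyi, add_sub_cancel]
      linarith
    · rw [add_zero, show a i = S.f i x - S.f i y by rw [hyi]; ring]
      refine (abs_sub _ _).trans ?_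
      linarith
  have hM : ∀ B ⊆ A, ‖S.ind B‖ ≤ |Γ| * ‖S.ind Λ‖ := fun B hB =>
    (hΓ B Λ (by rw [hΛcard, ← hA]; exact Finset.card_le_card hB)
      (fun i hi j hj => hlt i (hB hi) j hj)).trans
      (mul_le_mul_of_nonneg_right (le_abs_self Γ) (norm_nonneg _))
  have htail := S.norm_sum_le_of_norm_ind_le A c (by positivity) hc hM
  have hhead := hK y D hD
  have hΓind := mul_le_mul_of_nonneg_left hind (abs_nonneg Γ)
  rw [hdecomp]
  refine (norm_add_le _ _).trans ?_
  have := norm_sub_le y (S.P D y)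
  linarith

end SchauderBasisSys

open SchauderBasisSys

/-- A Schauder basis of a real Banach space is quasi-greedy and reverse
conservative if and only if there is a constant `C` such that
`‖x - G_m(x)‖ ≤ C ‖x - ∑_{i ∈ A} a_i e_i‖` for every `x`, `m`, every greedy ordering,
every finite `A` with `|A| = m` and `min A > β_m(x) = max Λ_m(x)`, and all scalars
`(a_i)` (property `(**)`, i.e. `‖x - G_m(x)‖ ≤ C σ^R_m(x)`). -/
theorem stmt_6 {X : Type*} [NormedAddCommGroup X] [NormedSpace ℝ X] [CompleteSpace X]
    (S : SchauderBasisSys X) :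
    (S.QuasiGreedy ∧ S.ReverseConservative) ↔
      ∃ C : ℝ, ∀ (x : X) (ρ : ℕ → ℕ) (m : ℕ) (A : Finset ℕ) (a : ℕ → ℝ),
        S.IsGreedyOrdering x ρ → A.card = m →
        (∀ i ∈ A, ∀ j ∈ Lam ρ m, j < i) →
        ‖x - S.G x ρ m‖ ≤ C * ‖x - ∑ i ∈ A, a i • S.e i‖ := by
  refine ⟨fun h => S.exists_norm_sub_G_le h.1 h.2, ?_⟩
  rintro ⟨C, hC⟩
  refine ⟨⟨1 + C, fun x ρ m hρ => ?_⟩, C, fun A B hAB hlt => ?_⟩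
  · obtain ⟨A, -, hA, hAlt⟩ :=
      exists_superset_card_eq_of_lt ∅ ((Lam ρ m).sup id) (m := m) (by simp)
    have h := hC x ρ m A 0 hρ hA fun i hi j hj =>
      (Finset.le_sup (f := id) hj).trans_lt (hAlt i hi (by simp))
    have htri := norm_sub_le x (x - S.G x ρ m)
    simp only [Pi.zero_apply, zero_smul, Finset.sum_const_zero, sub_zero] at h
    rw [sub_sub_cancel] at htri
    linarith
  · obtain ⟨A', hAA', hA', hA'lt⟩ := exists_superset_card_eq_of_lt A (B.sup id) hAB
    have hdisj : Disjoint A B :=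
      Finset.disjoint_left.2 fun i hi hi' => lt_irrefl _ (hlt i hi i hi')
    have hx : ∀ j, S.f j (S.ind (A ∪ B)) = if j ∈ A ∪ B then 1 else 0 := fun j => by
      simpa [ind] using S.f_sum (A ∪ B) 1 j
    have hbound : ∀ i ∈ A ∪ B, i < (A ∪ B).sup id + 1 := fun i hi =>
      Nat.lt_succ_of_le (Finset.le_sup (f := id) hi)
    obtain ⟨ρ, hρ, hLam⟩ := S.exists_isGreedyOrdering_Lam_eq (x := S.ind (A ∪ B))
      (N := (A ∪ B).sup id + 1) (D := B)
      (fun n hn => by rw [hx, if_neg fun h => (hbound n h).not_ge hn])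
      (fun i hi => Finset.mem_range.2 (hbound i (Finset.mem_union_right _ hi)))
      (fun i hi j _ => by
        rw [hx, hx, if_pos (Finset.mem_union_right _ hi)]
        split_ifs <;> simp)
    have h := hC _ ρ B.card A' (fun i => if i ∈ A then 1 else 0) hρ hA' (by
      rw [hLam]
      intro i hi j hj
      by_cases hiA : i ∈ A
      · exact hlt i hiA j hj
      · exact (Finset.le_sup (f := id) hj).trans_lt (hA'lt i hi hiA))
    have hPB : S.P B (S.ind (A ∪ B)) = S.ind B :=
      Finset.sum_congr rfl fun i hi => by
        rw [hx, if_pos (Finset.mem_union_right _ hi), one_smul]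
    have hsumA : ∑ i ∈ A', (if i ∈ A then (1 : ℝ) else 0) • S.e i = S.ind A := by
      simp only [ite_smul, one_smul, zero_smul]
      rw [Finset.sum_ite_mem, Finset.inter_eq_right.2 hAA', ind]
    have hunion : S.ind (A ∪ B) = S.ind A + S.ind B := Finset.sum_union hdisj
    rw [S.G_eq_P_Lam _ hρ.1, hLam, hPB, hsumA, hunion, add_sub_cancel_right,
      add_sub_cancel_left] at h
    exact h
end
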